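/- arXiv:2301.10703 — 2 statements merged into one kernel-verified Lean document; each statement's English description precedes it below -/
import Mathlib

section
/- Mixed-integer Helly theorem: Let d_R, d_Z be natural numbers, d = d_R + d_Z, and let M = ℝ^{d_R} × ℤ^{d_Z} denote the set of points x ∈ ℝ^d whose last d_Z coordinates are integers. Let (K_i)_{i ∈ I} be a finite family of convex subsets of ℝ^d. If for every subfamily J ⊆ I with |J| ≤ (d_R + 1)·2^{d_Z} the intersection ⋂_{i ∈ J} K_i contains a point of M, then the full intersection ⋂_{i ∈ I} K_i contains a point of M. -/
/-!
The theorem is a combination of two Helly theorems, one for `ℤ^m` and one for `ℝ^n`.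

*Reduction.* For each set `T` of at most `d_R + 1` indices, project `⋂ i ∈ T, K i` to the last
`d_Z` coordinates. Any `2 ^ d_Z` of these projections involve at most `(d_R + 1) * 2 ^ d_Z` of the
sets `K i`, so they share an integer point. Doignon's theorem (`doignon`) then gives a single
integer point `z` in all the projections, which says that any `d_R + 1` of the fibres of the `K i`
over `z` intersect. The classical Helly theorem in `ℝ^{d_R}` gives a point common to all fibres.

*Doignon's theorem.* As in the Radon-type proof of Helly's theorem, it is enough to show
(`exists_intPoint_forall_mem_hull`): given more than `2 ^ m` points `a i ∈ ℤ^m`, some integer point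
lies in the convex hull of `{a k | k ≠ i}` for every `i`. Suppose not, and take a counterexample
whose convex hull contains as few integer points as possible. Every `a j` is then a vertex of the
hull. By pigeonhole two of the points, `a i` and `a j`, are congruent modulo 2, so their midpoint
`b` is an integer point. Put `b` in place of `a i`. If the new family is again a counterexample, it
has lost the integer point `a i`. Otherwise there is an integer point `p` in all the hulls of the
new family, and putting `p` in place of `a j` in the original family gives a counterexample which
has lost the integer point `a j`. Both cases contradict minimality.
-/

/-- The mixed-integer lattice `M = ℝ^{d_R} × ℤ^{d_Z}` inside `ℝ^{d_R + d_Z}`: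
the set of points whose last `d_Z` coordinates are integers. -/
def mixedLattice (dR dZ : ℕ) : Set (Fin (dR + dZ) → ℝ) :=
  {x | ∀ i : Fin (dR + dZ), dR ≤ (i : ℕ) → ∃ z : ℤ, x i = (z : ℝ)}

/-- The integer lattice `ℤ^m` as a subset of `ℝ^m`. -/
def intPoints (m : ℕ) : Set (Fin m → ℝ) := Set.range fun (z : Fin m → ℤ) k => (z k : ℝ)

/-- If `x` is a vertex of the hull of `C ∪ {x}`, then replacing `x` by another point of that hull
loses `x`. -/
lemma notMem_convexHull_insert {E : Type*} [AddCommGroup E] [Module ℝ E] {C : Set E} {x b : E}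
    (hx : x ∉ convexHull ℝ C) (hb : b ∈ convexHull ℝ (insert x C)) (hbx : b ≠ x) :
    x ∉ convexHull ℝ (insert b C) := by
  intro h
  rcases C.eq_empty_or_nonempty with rfl | hC
  · simp at hb
    exact hbx hb
  rw [convexHull_insert hC, mem_convexJoin] at h hb
  simp only [Set.mem_singleton_iff, exists_eq_left] at h hb
  obtain ⟨r, hr, s, t, hs, ht, hst, hxb⟩ := hb
  obtain ⟨q, hq, u, v, hu, hv, huv, hxx⟩ := h
  -- Solving `x = u • (s • x + t • r) + v • q` for `x` exhibits it as a combination of `r` and `q`.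
  have hus : u * s ≠ 1 := by
    intro h1
    have hs1 : s = 1 := by nlinarith
    have ht0 : t = 0 := by linarith
    apply hbx
    rw [← hxb, hs1, ht0]
    simp
  have hpos : 0 < 1 - u * s := by
    have h2 : u * s ≤ 1 := by nlinarith
    rcases lt_or_eq_of_le h2 with h3 | h3
    · linarith
    · exact absurd h3 hus
  apply hx
  have hxe : x = (u * t / (1 - u * s)) • r + (v / (1 - u * s)) • q := by
    have h4 : (1 - u * s) • x = (u * t) • r + v • q := by
      have h5 : x = u • (s • x + t • r) + v • q := by rw [hxb, hxx]
      rw [sub_smul, one_smul]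
      nth_rewrite 1 [h5]
      module
    rw [div_eq_inv_mul, div_eq_inv_mul, mul_smul _ (u * t), mul_smul _ v, ← smul_add, ← h4,
      smul_smul, inv_mul_cancel₀ hpos.ne', one_smul]
  rw [hxe]
  refine convex_convexHull ℝ C hr hq (by positivity) (by positivity) ?_
  rw [← add_div, div_eq_one_iff_eq hpos.ne']
  have : v = 1 - u := by linarith
  have : t = 1 - s := by linarith
  subst v t
  ring

lemma finite_intPoints_inter_convexHull {m : ℕ} {ι : Type*} [Finite ι] (a : ι → Fin m → ℝ) :
    (intPoints m ∩ convexHull ℝ (Set.range a)).Finite := by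
  obtain ⟨B, hB⟩ := (Set.finite_range fun p : ι × Fin m => |a p.1 p.2|).bddAbove
  obtain ⟨n, hn⟩ := exists_nat_ge B
  have hn' : ∀ i k, |a i k| ≤ n := fun i k => (hB ⟨(i, k), rfl⟩).trans hn
  have hsub : convexHull ℝ (Set.range a) ⊆ Set.Icc (fun _ => -(n : ℝ)) (fun _ => (n : ℝ)) := by
    refine convexHull_min ?_ (convex_Icc _ _)
    rintro _ ⟨i, rfl⟩
    exact ⟨fun k => (abs_le.1 (hn' i k)).1, fun k => (abs_le.1 (hn' i k)).2⟩
  refine ((Set.finite_Icc (fun _ : Fin m => -(n : ℤ)) (fun _ => (n : ℤ))).image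
    fun (z : Fin m → ℤ) k => (z k : ℝ)).subset ?_
  rintro _ ⟨⟨z, rfl⟩, hz⟩
  have hz' := hsub hz
  refine ⟨z, ⟨fun k => ?_, fun k => ?_⟩, rfl⟩
  · have h1 : -(n : ℝ) ≤ (z k : ℝ) := hz'.1 k
    exact_mod_cast h1
  · have h1 : (z k : ℝ) ≤ (n : ℝ) := hz'.2 k
    exact_mod_cast h1

lemma image_update_compl {ι E : Type*} [DecidableEq ι] (a : ι → E) (j : ι) (p : E) :
    Function.update a j p '' {j}ᶜ = a '' {j}ᶜ :=
  Set.image_congr fun _ hk => Function.update_of_ne hk p a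

lemma image_update_subset {ι E : Type*} [DecidableEq ι] (a : ι → E) (j : ι) (p : E) (s : Set ι) :
    Function.update a j p '' s ⊆ insert p (a '' (s \ {j})) := by
  rintro _ ⟨k, hk, rfl⟩
  by_cases hkj : k = j
  · subst hkj; simp
  · rw [Function.update_of_ne hkj]
    exact Or.inr ⟨k, ⟨hk, hkj⟩, rfl⟩

/-- The descent step: the number of integer points in the hull drops when a vertex `a j` is
replaced by another point of the hull. -/
lemma ncard_update_lt {m : ℕ} {ι : Type*} [Finite ι] [DecidableEq ι] {a : ι → Fin m → ℝ}
    {j : ι} {p : Fin m → ℝ} (haj : a j ∈ intPoints m) (hj : a j ∉ convexHull ℝ (a '' {j}ᶜ))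
    (hp : p ∈ convexHull ℝ (Set.range a)) (hpj : p ≠ a j) :
    (intPoints m ∩ convexHull ℝ (Set.range (Function.update a j p))).ncard <
      (intPoints m ∩ convexHull ℝ (Set.range a)).ncard := by
  refine Set.ncard_lt_ncard ?_ (finite_intPoints_inter_convexHull a)
  rw [Set.ssubset_iff_of_subset]
  · refine ⟨a j, ⟨haj, subset_convexHull ℝ _ ⟨j, rfl⟩⟩, fun h => ?_⟩
    have hr : Set.range a ⊆ insert (a j) (a '' {j}ᶜ) := by
      rintro _ ⟨k, rfl⟩
      by_cases hkj : k = j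
      · subst hkj; simp
      · exact Or.inr ⟨k, hkj, rfl⟩
    refine notMem_convexHull_insert hj (convexHull_mono hr hp) hpj ?_
    refine convexHull_mono ?_ h.2
    have := image_update_subset a j p Set.univ
    rwa [Set.image_univ, ← Set.compl_eq_univ_sdiff] at this
  · refine Set.inter_subset_inter_right _ (convexHull_min ?_ (convex_convexHull ℝ _))
    rintro _ ⟨k, rfl⟩
    by_cases hkj : k = j
    · subst hkj; simpa using hp
    · rw [Function.update_of_ne hkj]
      exact subset_convexHull ℝ _ ⟨k, rfl⟩

/-- If `p` lies in all the hulls omitting one point `a k` with `k ≠ j`, then replacing `a j` by `p`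
does not enlarge any of the hulls omitting one point. -/
lemma convexHull_update_subset {ι E : Type*} [AddCommGroup E] [Module ℝ E] [DecidableEq ι]
    {a : ι → E} {j : ι} {p : E} (hp : ∀ k, k ≠ j → p ∈ convexHull ℝ (a '' {k}ᶜ)) (k : ι) :
    convexHull ℝ (Function.update a j p '' {k}ᶜ) ⊆ convexHull ℝ (a '' {k}ᶜ) := by
  by_cases hkj : k = j
  · subst hkj
    rw [image_update_compl]
  · refine convexHull_min ((image_update_subset a j p _).trans ?_) (convex_convexHull ℝ _)
    refine Set.insert_subset (hp k hkj) ?_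
    exact (Set.image_mono Set.sdiff_subset).trans (subset_convexHull ℝ _)

/-- Among more than `2 ^ m` integer points, two have an integer midpoint. -/
lemma exists_midpoint_mem {m : ℕ} {ι : Type*} [Fintype ι] (hι : 2 ^ m < Fintype.card ι)
    {a : ι → Fin m → ℝ} (ha : ∀ i, a i ∈ intPoints m) :
    ∃ i j, i ≠ j ∧ midpoint ℝ (a i) (a j) ∈ intPoints m := by
  choose z hz using ha
  obtain ⟨i, j, hij, h⟩ := Fintype.exists_ne_map_eq_of_card_lt
    (fun i k => decide (z i k % 2 = 0) : ι → Fin m → Bool) (by simpa using hι)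
  refine ⟨i, j, hij, fun k => (z i k + z j k) / 2, ?_⟩
  funext k
  have hk : (z i k % 2 = 0) ↔ (z j k % 2 = 0) := by simpa using congrFun h k
  have h2 : z i k + z j k = 2 * ((z i k + z j k) / 2) := by omega
  have h3 : (z i k : ℝ) + z j k = 2 * (((z i k + z j k) / 2 : ℤ) : ℝ) := by exact_mod_cast h2
  rw [← hz i, ← hz j, midpoint_eq_smul_add]
  simp only [Pi.smul_apply, Pi.add_apply, smul_eq_mul, h3, invOf_eq_inv]
  ring

/-- The integer analogue of Radon's theorem in the form that yields Helly's theorem. -/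
theorem exists_intPoint_forall_mem_hull {m : ℕ} {ι : Type*} [Fintype ι]
    (hι : 2 ^ m < Fintype.card ι) (a : ι → Fin m → ℝ) (ha : ∀ i, a i ∈ intPoints m) :
    ∃ p ∈ intPoints m, ∀ i, p ∈ convexHull ℝ (a '' {i}ᶜ) := by
  classical
  generalize hN : (intPoints m ∩ convexHull ℝ (Set.range a)).ncard = N
  induction N using Nat.strong_induction_on generalizing a with
  | _ N ih =>
  subst hN
  by_contra! hno
  have mem_hull {i k : ι} (hik : i ≠ k) : a i ∈ convexHull ℝ (a '' {k}ᶜ) :=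
    subset_convexHull ℝ _ ⟨i, hik, rfl⟩
  have hvert (j : ι) : a j ∉ convexHull ℝ (a '' {j}ᶜ) := by
    intro hj
    obtain ⟨k, hk⟩ := hno (a j) (ha j)
    by_cases hjk : j = k
    · exact hk (hjk ▸ hj)
    · exact hk (mem_hull hjk)
  have hupd (j : ι) {p : Fin m → ℝ} (hp : p ∈ intPoints m) (k : ι) :
      Function.update a j p k ∈ intPoints m := by
    by_cases hkj : k = j
    · subst hkj; simpa using hp
    · rw [Function.update_of_ne hkj]; exact ha k
  obtain ⟨i, j, hij, hb⟩ := exists_midpoint_mem hι ha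
  have hne : a i ≠ a j := fun h => hvert i (by rw [h]; exact mem_hull hij.symm)
  set b := midpoint ℝ (a i) (a j) with hbdef
  have hbmem {s : Set ι} (hi : i ∈ s) (hj : j ∈ s) : b ∈ convexHull ℝ (a '' s) :=
    (convex_convexHull ℝ _).midpoint_mem (subset_convexHull ℝ _ ⟨i, hi, rfl⟩)
      (subset_convexHull ℝ _ ⟨j, hj, rfl⟩)
  have hbr : b ∈ convexHull ℝ (Set.range a) := by
    rw [← Set.image_univ]; exact hbmem trivial trivial
  have hbi : b ≠ a i := by simpa [hbdef] using hne
  have hbj : b ≠ a j := by simpa [hbdef] using hne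
  -- By minimality, the family with `b` in place of `a i` is not a counterexample.
  obtain ⟨p, hp, hpk⟩ := ih _ (ncard_update_lt (ha i) (hvert i) hbr hbi) _ (hupd i hb) rfl
  have hpa (k : ι) (hkj : k ≠ j) : p ∈ convexHull ℝ (a '' {k}ᶜ) := by
    by_cases hki : k = i
    · subst hki
      simpa only [image_update_compl] using hpk k
    · refine convexHull_min ((image_update_subset a i b _).trans ?_) (convex_convexHull ℝ _) (hpk k)
      refine Set.insert_subset (hbmem (Ne.symm hki) (Ne.symm hkj)) ?_
      exact (Set.image_mono Set.sdiff_subset).trans (subset_convexHull ℝ _)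
  have hpj : p ≠ a j := by
    rintro rfl
    have hb' : b ∈ convexHull ℝ (insert (a j) (a '' {j}ᶜ)) := by
      refine convexHull_mono ?_ hbr
      rintro _ ⟨k, rfl⟩
      by_cases hkj : k = j
      · subst hkj; simp
      · exact Or.inr ⟨k, hkj, rfl⟩
    refine notMem_convexHull_insert (hvert j) hb' hbj (convexHull_mono ?_ (hpk j))
    exact (image_update_subset a i b _).trans
      (Set.insert_subset_insert (Set.image_mono Set.sdiff_subset))
  have hpr : p ∈ convexHull ℝ (Set.range a) :=
    convexHull_mono (Set.image_subset_range _ _) (hpa i hij)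
  obtain ⟨q, hq, hqk⟩ := ih _ (ncard_update_lt (ha j) (hvert j) hpr hpj) _ (hupd j hp) rfl
  obtain ⟨k, hk⟩ := hno q hq
  exact hk (convexHull_update_subset hpa k (hqk k))

/-- **Doignon's theorem**: the integer lattice `ℤ^m` has Helly number at most `2 ^ m`. -/
theorem doignon {m : ℕ} {κ : Type*} (F : κ → Set (Fin m → ℝ)) (hF : ∀ i, Convex ℝ (F i))
    (s : Finset κ)
    (h : ∀ J ⊆ s, J.card ≤ 2 ^ m → ∃ x ∈ intPoints m, ∀ i ∈ J, x ∈ F i) :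
    ∃ x ∈ intPoints m, ∀ i ∈ s, x ∈ F i := by
  classical
  induction s using Finset.strongInduction with
  | H s ih =>
  by_cases hs : s.card ≤ 2 ^ m
  · exact h s subset_rfl hs
  have hex (i : s) : ∃ x ∈ intPoints m, ∀ k ∈ s.erase i, x ∈ F k :=
    ih _ (Finset.erase_ssubset i.2) fun J hJ => h J (hJ.trans (Finset.erase_subset _ _))
  choose a ha haF using hex
  obtain ⟨p, hp, hpi⟩ := exists_intPoint_forall_mem_hull (by simpa using hs) a ha
  refine ⟨p, hp, fun i hi => ?_⟩
  refine convexHull_min ?_ (hF i) (hpi ⟨i, hi⟩)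
  rintro _ ⟨k, hk, rfl⟩
  exact haF k i (Finset.mem_erase.2 ⟨fun h => hk (Subtype.ext h.symm), hi⟩)

/-- Mixed-integer Helly theorem: if every subfamily of at most `(d_R + 1) * 2 ^ d_Z`
of the convex sets `K i` has a common point in the mixed-integer lattice, then the
whole family has a common point in the mixed-integer lattice. -/
theorem mixed_integer_helly (dR dZ : ℕ) (ι : Type*) [Fintype ι]
    (K : ι → Set (Fin (dR + dZ) → ℝ)) (hK : ∀ i, Convex ℝ (K i))
    (h : ∀ J : Finset ι, J.card ≤ (dR + 1) * 2 ^ dZ →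
      ∃ x ∈ mixedLattice dR dZ, ∀ i ∈ J, x ∈ K i) :
    ∃ x ∈ mixedLattice dR dZ, ∀ i, x ∈ K i := by
  classical
  let π : (Fin (dR + dZ) → ℝ) →ₗ[ℝ] (Fin dZ → ℝ) := LinearMap.funLeft ℝ ℝ (Fin.natAdd dR)
  obtain ⟨_, ⟨z, rfl⟩, hz⟩ := doignon (fun T : Finset ι => π '' ⋂ i ∈ T, K i)
    (fun T => (convex_iInter₂ fun i _ => hK i).linear_image π)
    (Finset.univ.filter fun T : Finset ι => T.card ≤ dR + 1) (by
      intro J hJ hJc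
      obtain ⟨x, hx, hxK⟩ := h (J.biUnion id) (by
        calc (J.biUnion id).card ≤ J.card * (dR + 1) :=
              Finset.card_biUnion_le_card_mul _ _ _ fun T hT => (Finset.mem_filter.1 (hJ hT)).2
          _ ≤ (dR + 1) * 2 ^ dZ := by rw [mul_comm]; gcongr)
      choose w hw using fun k : Fin dZ => hx (Fin.natAdd dR k) (by simp)
      refine ⟨π x, ⟨w, ?_⟩, fun T hT => ⟨x, ?_, rfl⟩⟩
      · funext k
        exact (hw k).symm
      · exact Set.mem_iInter₂.2 fun i hi => hxK i (Finset.mem_biUnion.2 ⟨T, hT, hi⟩))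
  -- The fibres of the sets `K i` over the common integer point satisfy Helly's hypothesis.
  obtain ⟨y, hy⟩ := Convex.helly_theorem' (𝕜 := ℝ) (s := Finset.univ)
    (F := fun i => {y : Fin dR → ℝ | Fin.append y (fun k => (z k : ℝ)) ∈ K i})
    (by
      intro i _ y₁ h₁ y₂ h₂ s t hs ht hst
      have := hK i h₁ h₂ hs ht hst
      change Fin.append (s • y₁ + t • y₂) (fun k => (z k : ℝ)) ∈ K i
      convert this using 1
      funext k
      refine Fin.addCases (fun k => ?_) (fun k => ?_) k
      · simp
      · simp [← add_mul, hst])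
    (by
      intro T _ hT
      obtain ⟨x, hx, hxz⟩ := hz T (Finset.mem_filter.2 ⟨Finset.mem_univ _, by simpa using hT⟩)
      refine ⟨fun k => x (Fin.castAdd dZ k), Set.mem_iInter₂.2 fun i hi => ?_⟩
      have hxe : Fin.append (fun k => x (Fin.castAdd dZ k)) (fun k => (z k : ℝ)) = x := by
        funext k
        refine Fin.addCases (fun k => ?_) (fun k => ?_) k
        · simp
        · rw [Fin.append_right]
          exact (congrFun hxz k).symm
      simpa [hxe] using Set.mem_iInter₂.1 hx i hi)
  refine ⟨Fin.append y (fun k => (z k : ℝ)), ?_, fun i => ?_⟩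
  · intro k hk
    induction k using Fin.addCases with
    | left k => simp at hk; omega
    | right k => exact ⟨z k, by simp⟩
  · simpa using Set.mem_iInter₂.1 hy i (Finset.mem_univ i)
end

section
/- Combinatorial dimension of sampled mixed-integer convex programs (Theorem 1): Let d_R, d_Z be natural numbers, d = d_R + d_Z, M = ℝ^{d_R} × ℤ^{d_Z} ⊆ ℝ^d, and c ∈ ℝ^d. Let F be a finite family of convex subsets of ℝ^d such that M ∩ ⋂_{G ∈ F} G is nonempty and the infimum J(F) of ⟨c, x⟩ over this set is finite. Then there exists a subfamily B ⊆ F with |B| ≤ (d_R + 1)·2^{d_Z} − 1 such that J(B) = J(F), i.e., the infimum of ⟨c, x⟩ over M ∩ ⋂_{G ∈ B} G equals J(F). -/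
/-- `Jval dR dZ c F` is the infimum of the linear objective `⟨c, x⟩` over the points `x`
of the mixed-integer lattice belonging to all the constraint sets in `F`. -/
noncomputable def Jval (dR dZ : ℕ) (c : Fin (dR + dZ) → ℝ)
    (F : Finset (Set (Fin (dR + dZ) → ℝ))) : ℝ :=
  sInf ((fun x => ∑ i, c i * x i) '' (mixedLattice dR dZ ∩ ⋂ G ∈ F, G))

/-- The right-hand sides of a minimal infeasible system `a i t < b i`, `t ∈ T`, can be chosen
so that each constraint in `r` is attained with equality at a point satisfying all other
constraints. They are adjusted one at a time, replacing `b i₀` by the minimum of `a i₀` over the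
points satisfying all the other constraints. -/
lemma exists_tight_rhs {α ι : Type*} (T : Finset α) (a : ι → α → ℝ) (b : ι → ℝ) (s : Finset ι)
    (hinf : ∀ t ∈ T, ∃ i ∈ s, b i ≤ a i t)
    (hmin : ∀ i ∈ s, ∃ t ∈ T, ∀ j ∈ s, j ≠ i → a j t < b j) (r : Finset ι) (hr : r ⊆ s) :
    ∃ b' : ι → ℝ, (∀ t ∈ T, ∃ i ∈ s, b' i ≤ a i t) ∧
      (∀ i ∈ s, ∃ t ∈ T, (∀ j ∈ s, j ≠ i → a j t < b' j) ∧ (i ∈ r → a i t = b' i)) := by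
  classical
  induction r using Finset.induction_on with
  | empty =>
    refine ⟨b, hinf, fun i hi => ?_⟩
    obtain ⟨t, ht, h⟩ := hmin i hi
    exact ⟨t, ht, h, by simp⟩
  | insert i₀ r hi₀ ih =>
    obtain ⟨b', hinf', hmin'⟩ := ih (fun i hi => hr (Finset.mem_insert_of_mem hi))
    have hi₀s : i₀ ∈ s := hr (Finset.mem_insert_self _ _)
    have hne : (T.filter fun t => ∀ j ∈ s, j ≠ i₀ → a j t < b' j).Nonempty := by
      obtain ⟨t, ht, h, -⟩ := hmin' i₀ hi₀s
      exact ⟨t, Finset.mem_filter.2 ⟨ht, h⟩⟩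
    obtain ⟨y, hy, hymin⟩ := Finset.exists_min_image _ (a i₀) hne
    obtain ⟨hyT, hy⟩ := Finset.mem_filter.1 hy
    have hle : b' i₀ ≤ a i₀ y := by
      obtain ⟨i, hi, hiy⟩ := hinf' y hyT
      by_cases h : i = i₀
      · exact h ▸ hiy
      · exact absurd (hy i hi h) (not_lt.2 hiy)
    refine ⟨Function.update b' i₀ (a i₀ y), fun t ht => ?_, fun i hi => ?_⟩
    · by_cases h : ∀ j ∈ s, j ≠ i₀ → a j t < b' j
      · exact ⟨i₀, hi₀s, by simpa using hymin t (Finset.mem_filter.2 ⟨ht, h⟩)⟩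
      · push Not at h
        obtain ⟨j, hj, hne, hjt⟩ := h
        exact ⟨j, hj, by simpa [Function.update_of_ne hne] using hjt⟩
    · by_cases h : i = i₀
      · subst h
        refine ⟨y, hyT, fun j hj hji => ?_, fun _ => by simp⟩
        simpa [Function.update_of_ne hji] using hy j hj hji
      · obtain ⟨t, ht, h1, h2⟩ := hmin' i hi
        refine ⟨t, ht, fun j hj hji => ?_, fun hir => ?_⟩
        · by_cases hj0 : j = i₀
          · subst hj0
            simpa using (h1 j hj hji).trans_le hle
          · simpa [Function.update_of_ne hj0] using h1 j hj hji
        · rw [Function.update_of_ne h]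
          exact h2 (Finset.mem_of_mem_insert_of_ne hir h)

/-- Doignon's theorem for strict inequalities on a finite set `T` of lattice points closed under
integral midpoints. The functions `a i` need only be affine along midpoints. -/
lemma doignon_halfspaces {n : ℕ} {ι : Type*} (T : Finset (Fin n → ℤ))
    (hT : ∀ x ∈ T, ∀ y ∈ T, ∀ m : Fin n → ℤ, m + m = x + y → m ∈ T)
    (a : ι → (Fin n → ℤ) → ℝ)
    (ha : ∀ i x y m, m + m = x + y → a i m + a i m = a i x + a i y) (b : ι → ℝ) (S : Finset ι)
    (h : ∀ I ⊆ S, I.card ≤ 2 ^ n → ∃ t ∈ T, ∀ i ∈ I, a i t < b i) :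
    ∃ t ∈ T, ∀ i ∈ S, a i t < b i := by
  classical
  induction S using Finset.strongInduction with
  | H s ih =>
    by_cases hcard : s.card ≤ 2 ^ n
    · exact h s subset_rfl hcard
    by_contra! hinf
    have hmin : ∀ i ∈ s, ∃ t ∈ T, ∀ j ∈ s, j ≠ i → a j t < b j := by
      intro i hi
      obtain ⟨t, ht, h1⟩ := ih (s.erase i) (Finset.erase_ssubset hi)
        (fun I hI => h I (hI.trans (Finset.erase_subset _ _)))
      exact ⟨t, ht, fun j hj hji => h1 j (Finset.mem_erase.2 ⟨hji, hj⟩)⟩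
    obtain ⟨b', hinf', hmin'⟩ := exists_tight_rhs T a b s hinf hmin s subset_rfl
    choose! y hyT hy hyeq using hmin'
    obtain ⟨i, hi, j, hj, hij, hmod⟩ := Finset.exists_ne_map_eq_of_card_lt_of_maps_to
      (s := s) (t := (Finset.univ : Finset (Fin n → ZMod 2)))
      (f := fun i k => (y i k : ZMod 2)) (by simpa using hcard) (fun _ _ => Finset.mem_univ _)
    have hm : ∀ k, ∃ m : ℤ, m + m = y i k + y j k := by
      intro k
      have h1 := (ZMod.intCast_eq_intCast_iff_dvd_sub _ _ 2).1 (congrFun hmod k)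
      obtain ⟨q, hq⟩ := h1
      exact ⟨y i k + q, by push_cast at hq; linarith⟩
    choose m hm using hm
    have hm : m + m = y i + y j := funext hm
    obtain ⟨l, hl, hlm⟩ := hinf' m (hT _ (hyT i hi) _ (hyT j hj) m hm)
    have hsum := ha l _ _ _ hm
    have hi' : a l (y i) ≤ b' l := by
      by_cases hli : l = i
      · subst hli; exact (hyeq l hl hl).le
      · exact (hy i hi l hl hli).le
    have hj' : a l (y j) ≤ b' l := by
      by_cases hlj : l = j
      · subst hlj; exact (hyeq l hl hl).le
      · exact (hy j hj l hl hlj).le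
    -- Equality holds at `y i` only for the constraint `i`, so one of the two bounds is strict.
    by_cases hli : l = i
    · have := hy j hj l hl (by rintro rfl; exact hij hli.symm)
      linarith
    · have := hy i hi l hl hli
      linarith

/-- Doignon's theorem: the Helly number of `ℤ^n` with respect to convex sets in `ℝ^n` is at
most `2 ^ n`. -/
lemma doignon_s1 {n : ℕ} {ι : Type*} (s : Finset ι) (G : ι → Set (Fin n → ℝ))
    (hG : ∀ i ∈ s, Convex ℝ (G i))
    (h : ∀ I ⊆ s, I.card ≤ 2 ^ n → ∃ z : Fin n → ℤ, ∀ i ∈ I, (fun k => (z k : ℝ)) ∈ G i) :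
    ∃ z : Fin n → ℤ, ∀ i ∈ s, (fun k => (z k : ℝ)) ∈ G i := by
  classical
  set e : (Fin n → ℤ) → (Fin n → ℝ) := fun z k => (z k : ℝ) with he
  choose! p hp using h
  -- One common point is kept for each small subfamily, and `G i` is replaced by the hull of
  -- those lying in it.
  let X : Finset (Fin n → ℤ) := s.powerset.image p
  let P : ι → Set (Fin n → ℝ) := fun i => convexHull ℝ (e '' {x | x ∈ X ∧ e x ∈ G i})
  have hPG : ∀ i ∈ s, P i ⊆ G i := fun i hi =>
    convexHull_min (by rintro _ ⟨x, hx, rfl⟩; exact hx.2) (hG i hi)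
  have hPX : ∀ i, P i ⊆ convexHull ℝ (e '' X) := fun i =>
    convexHull_mono (Set.image_mono fun x hx => hx.1)
  have hPclosed : ∀ i, IsClosed (P i) := fun i =>
    ((X.finite_toSet.subset fun x hx => hx.1).image e).isClosed_convexHull ℝ
  have hfin : {z | e z ∈ convexHull ℝ (e '' X)}.Finite := by
    obtain ⟨L, hL⟩ := X.finite_toSet.bddBelow
    obtain ⟨U, hU⟩ := X.finite_toSet.bddAbove
    refine (Set.finite_Icc L U).subset fun z hz => ?_
    have hsub : convexHull ℝ (e '' X) ⊆ Set.Icc (e L) (e U) := by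
      refine convexHull_min ?_ (convex_Icc _ _)
      rintro _ ⟨x, hx, rfl⟩
      exact ⟨fun k => Int.cast_le.2 (hL hx k), fun k => Int.cast_le.2 (hU hx k)⟩
    exact ⟨fun k => Int.cast_le.1 ((hsub hz).1 k), fun k => Int.cast_le.1 ((hsub hz).2 k)⟩
  let T : Finset (Fin n → ℤ) := hfin.toFinset
  have hTmem : ∀ z, z ∈ T ↔ e z ∈ convexHull ℝ (e '' X) := fun z => by simp [T]
  have hmid : ∀ x y m : Fin n → ℤ, m + m = x + y → e m + e m = e x + e y := by
    intro x y m hm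
    funext k
    have := congrFun hm k
    simp only [Pi.add_apply, he] at this ⊢
    exact_mod_cast this
  have hT : ∀ x ∈ T, ∀ y ∈ T, ∀ m : Fin n → ℤ, m + m = x + y → m ∈ T := by
    intro x hx y hy m hm
    rw [hTmem] at *
    have h1 : e m = (1 / 2 : ℝ) • e x + (1 / 2 : ℝ) • e y := by
      rw [← smul_add, ← hmid x y m hm]
      module
    rw [h1]
    exact convex_convexHull ℝ _ hx hy (by norm_num) (by norm_num) (by norm_num)
  have hsep : ∀ q : ι × (Fin n → ℤ), e q.2 ∉ P q.1 →
      ∃ f : (Fin n → ℝ) →L[ℝ] ℝ, ∀ x ∈ P q.1, f x < f (e q.2) := by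
    intro q hq
    obtain ⟨f, u, h1, h2⟩ :=
      geometric_hahn_banach_closed_point (convex_convexHull ℝ _) (hPclosed q.1) hq
    exact ⟨f, fun x hx => (h1 x hx).trans h2⟩
  choose! f hf using hsep
  obtain ⟨t, htT, ht⟩ := doignon_halfspaces T hT (fun q x => f q (e x))
    (fun q x y m hm => by rw [← map_add, ← map_add, hmid x y m hm]) (fun q => f q (e q.2))
    ((s ×ˢ T).filter fun q => e q.2 ∉ P q.1) (by
      intro I hI hcard
      have hsub : I.image Prod.fst ⊆ s := by
        intro i hi
        obtain ⟨q, hq, rfl⟩ := Finset.mem_image.1 hi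
        exact (Finset.mem_product.1 (Finset.mem_filter.1 (hI hq)).1).1
      have hX : p (I.image Prod.fst) ∈ X :=
        Finset.mem_image_of_mem p (Finset.mem_powerset.2 hsub)
      refine ⟨p (I.image Prod.fst), (hTmem _).2 (subset_convexHull ℝ _ ⟨_, hX, rfl⟩), ?_⟩
      intro q hq
      refine hf q (Finset.mem_filter.1 (hI hq)).2 _ (subset_convexHull ℝ _ ⟨_, ⟨hX, ?_⟩, rfl⟩)
      exact hp _ hsub (Finset.card_image_le.trans hcard) _ (Finset.mem_image_of_mem _ hq))
  refine ⟨t, fun i hi => ?_⟩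
  by_contra hti
  -- Otherwise the half-space cutting off `t` itself from `P i` belongs to the system.
  exact lt_irrefl _ (ht (i, t) (Finset.mem_filter.2
    ⟨Finset.mem_product.2 ⟨hi, htT⟩, fun h => hti (hPG i hi h)⟩))

lemma append_comb {m n : ℕ} (a b : ℝ) (x y : Fin m → ℝ) (u v : Fin n → ℝ) :
    Fin.append (a • x + b • y) (a • u + b • v) =
      a • Fin.append x u + b • Fin.append y v := by
  funext k
  refine Fin.addCases (fun i => ?_) (fun i => ?_) k <;> simp

/-- The Helly number of `ℝ^m × ℤ^n` with respect to convex sets in `ℝ^(m + n)` is at most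
`(m + 1) * 2 ^ n`. -/
lemma mixed_helly {m n : ℕ} {ι : Type*} (s : Finset ι) (G : ι → Set (Fin (m + n) → ℝ))
    (hG : ∀ i ∈ s, Convex ℝ (G i))
    (h : ∀ I ⊆ s, I.card ≤ (m + 1) * 2 ^ n →
      ∃ (y : Fin m → ℝ) (z : Fin n → ℤ), ∀ i ∈ I, Fin.append y (fun k => (z k : ℝ)) ∈ G i) :
    ∃ (y : Fin m → ℝ) (z : Fin n → ℤ), ∀ i ∈ s, Fin.append y (fun k => (z k : ℝ)) ∈ G i := by
  classical
  obtain ⟨z, hz⟩ := doignon_s1 (s.powerset.filter fun A => A.card ≤ m + 1)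
    (fun A => {w : Fin n → ℝ | ∃ y : Fin m → ℝ, ∀ i ∈ A, Fin.append y w ∈ G i})
    (by
      intro A hA u hu v hv a b ha hb hab
      obtain ⟨x, hx⟩ := hu
      obtain ⟨y, hy⟩ := hv
      refine ⟨a • x + b • y, fun i hi => ?_⟩
      rw [append_comb]
      exact hG i (Finset.mem_powerset.1 (Finset.mem_filter.1 hA).1 hi) (hx i hi) (hy i hi)
        ha hb hab)
    (by
      intro I hI hcard
      obtain ⟨y, z, hyz⟩ := h (I.biUnion id)
        (Finset.biUnion_subset.2 fun A hA =>
          Finset.mem_powerset.1 (Finset.mem_filter.1 (hI hA)).1)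
        (by
          refine (Finset.card_biUnion_le_card_mul I id (m + 1)
            fun A hA => (Finset.mem_filter.1 (hI hA)).2).trans ?_
          rw [mul_comm]
          exact Nat.mul_le_mul_left _ hcard)
      exact ⟨z, fun A hA => ⟨y, fun i hi => hyz i (Finset.mem_biUnion.2 ⟨A, hA, hi⟩)⟩⟩)
  obtain ⟨y, hy⟩ := Convex.helly_theorem' (𝕜 := ℝ) (s := s)
    (F := fun i => {y : Fin m → ℝ | Fin.append y (fun k => (z k : ℝ)) ∈ G i})
    (by
      intro i hi x hx y hy a b ha hb hab
      have := hG i hi hx hy ha hb hab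
      rwa [← append_comb, ← add_smul, hab, one_smul] at this)
    (by
      intro A hA hcard
      obtain ⟨y, hy⟩ := hz A (Finset.mem_filter.2
        ⟨Finset.mem_powerset.2 hA, by simpa using hcard⟩)
      exact ⟨y, Set.mem_iInter₂.2 hy⟩)
  exact ⟨y, z, fun i hi => Set.mem_iInter₂.1 hy i hi⟩

lemma append_mem_mixedLattice {m n : ℕ} (y : Fin m → ℝ) (z : Fin n → ℤ) :
    Fin.append y (fun k => (z k : ℝ)) ∈ mixedLattice m n := by
  intro i
  refine Fin.addCases (fun j hj => ?_) (fun j _ => ⟨z j, by simp⟩) i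
  simp only [Fin.val_castAdd] at hj
  omega

lemma exists_append_of_mem_mixedLattice {m n : ℕ} {x : Fin (m + n) → ℝ}
    (hx : x ∈ mixedLattice m n) :
    ∃ (y : Fin m → ℝ) (z : Fin n → ℤ), x = Fin.append y (fun k => (z k : ℝ)) := by
  have h : ∀ j : Fin n, ∃ z : ℤ, x (Fin.natAdd m j) = z := fun j => hx _ (by simp)
  choose z hz using h
  refine ⟨fun j => x (Fin.castAdd n j), z, funext fun i => ?_⟩
  refine Fin.addCases (fun j => by simp) (fun j => by simp [hz]) i

/-- Theorem 1 (combinatorial dimension): for a sampled mixed-integer convex program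
with a nonempty feasible set and finite optimal value, there is a subfamily `B` of the
constraints of cardinality at most `(d_R + 1) * 2 ^ d_Z - 1` achieving the same
optimal value. -/
theorem combinatorial_dimension (dR dZ : ℕ) (c : Fin (dR + dZ) → ℝ)
    (F : Finset (Set (Fin (dR + dZ) → ℝ))) (hconv : ∀ G ∈ F, Convex ℝ G)
    (hne : (mixedLattice dR dZ ∩ ⋂ G ∈ F, G).Nonempty)
    (hbdd : BddBelow
      ((fun x => ∑ i, c i * x i) '' (mixedLattice dR dZ ∩ ⋂ G ∈ F, G))) :
    ∃ B ⊆ F, B.card ≤ (dR + 1) * 2 ^ dZ - 1 ∧ Jval dR dZ c B = Jval dR dZ c F := by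
  classical
  set J := Jval dR dZ c F with hJ
  let H : Set (Fin (dR + dZ) → ℝ) := {x | ∑ i, c i * x i < J}
  have hH : Convex ℝ H := by
    refine convex_halfSpace_lt (f := fun x : Fin (dR + dZ) → ℝ => ∑ i, c i * x i) ⟨?_, ?_⟩ J
    · intro x y
      simp [mul_add, Finset.sum_add_distrib]
    · intro a x
      simp only [Pi.smul_apply, smul_eq_mul, Finset.mul_sum]
      exact Finset.sum_congr rfl fun i _ => by ring
  obtain ⟨I, hI, hcard, hIinf⟩ : ∃ I ⊆ insert H F, I.card ≤ (dR + 1) * 2 ^ dZ ∧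
      ∀ x ∈ mixedLattice dR dZ, ∃ G ∈ I, x ∉ G := by
    by_contra! hcon
    obtain ⟨y, z, hyz⟩ := mixed_helly (insert H F) id
      (by
        intro G hG
        rcases Finset.mem_insert.1 hG with rfl | hG
        · exact hH
        · exact hconv G hG)
      (by
        intro I hI hcard
        obtain ⟨x, hx, hxI⟩ := hcon I hI hcard
        obtain ⟨y, z, rfl⟩ := exists_append_of_mem_mixedLattice hx
        exact ⟨y, z, hxI⟩)
    have h1 : J ≤ _ := csInf_le hbdd ⟨_, ⟨append_mem_mixedLattice y z,
      Set.mem_iInter₂.2 fun G hG => hyz G (Finset.mem_insert_of_mem hG)⟩, rfl⟩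
    exact absurd (hyz H (Finset.mem_insert_self _ _)) (not_lt.2 h1)
  have hBF : I.erase H ⊆ F := fun G hG =>
    Finset.mem_of_mem_insert_of_ne (hI (Finset.mem_of_mem_erase hG)) (Finset.ne_of_mem_erase hG)
  have hHI : H ∈ I := by
    by_contra hHI
    obtain ⟨x, hx, hxF⟩ := hne
    obtain ⟨G, hG, hxG⟩ := hIinf x hx
    rw [← Finset.erase_eq_of_notMem hHI] at hG
    exact hxG (Set.mem_iInter₂.1 hxF G (hBF hG))
  have hsub : mixedLattice dR dZ ∩ ⋂ G ∈ F, G ⊆ mixedLattice dR dZ ∩ ⋂ G ∈ I.erase H, G :=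
    Set.inter_subset_inter_right _ (Set.biInter_mono hBF fun _ _ => subset_rfl)
  have hlow : ∀ v ∈ (fun x => ∑ i, c i * x i) ''
      (mixedLattice dR dZ ∩ ⋂ G ∈ I.erase H, G), J ≤ v := by
    rintro _ ⟨x, ⟨hx, hxB⟩, rfl⟩
    obtain ⟨G, hG, hxG⟩ := hIinf x hx
    by_cases hGH : G = H
    · subst hGH
      exact not_lt.1 hxG
    · exact absurd (Set.mem_iInter₂.1 hxB G (Finset.mem_erase.2 ⟨hGH, hG⟩)) hxG
  refine ⟨I.erase H, hBF, ?_, le_antisymm ?_ ?_⟩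
  · rw [Finset.card_erase_of_mem hHI]
    exact Nat.sub_le_sub_right hcard 1
  · exact csInf_le_csInf ⟨J, hlow⟩ (hne.image _) (Set.image_mono hsub)
  · exact le_csInf ((hne.mono hsub).image _) hlow
end
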